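/- Fix integers A ≥ 2 and z ≥ 1 with A ≥ z, and a real v ≥ 0. For 0 < q < 1/2 set p = 1 − q, λ = q/p, [n] = (1 − λ^n)/(1 − λ), P_A(z) = (I_{4pq}(z,1/2) − λ^{A+1})/(1 − λ^{A+1}), and R(q) = (q z/(2p)) I_{4pq}(z,1/2) − ((A+1)λ^{A+1}/(p(1−λ)^3 [A+1]^2)) I_{(p−q)^2}(1/2,z) + ((2−λ+λ^{A+2})/((1−λ)^2[A+1])) p^{z−1}q^z/B(z,z) + P_A(z)(v+1). Then R(q)/q^z → 2 C(2z−1, z)(v+1) + 2/B(z,z) as q → 0⁺, where C(n,k) denotes the binomial coefficient. -/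

import Mathlib

open scoped BigOperators
open Filter

/-- The Beta function `B(a,b) = ∫_0^1 t^(a-1) (1-t)^(b-1) dt`. -/
noncomputable def Beta (a b : ℝ) : ℝ :=
  ∫ t in (0:ℝ)..1, t ^ (a - 1) * (1 - t) ^ (b - 1)

/-- The regularized incomplete Beta function
`I_x(a,b) = (1/B(a,b)) ∫_0^x t^(a-1) (1-t)^(b-1) dt`. -/
noncomputable def regBeta (x a b : ℝ) : ℝ :=
  (∫ t in (0:ℝ)..x, t ^ (a - 1) * (1 - t) ^ (b - 1)) / Beta a b

open ProbabilityTheory in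
lemma Beta_eq_beta (a b : ℝ) (ha : 0 < a) (hb : 0 < b) : Beta a b = beta a b := by
  rw [beta_eq_betaIntegralReal a b ha hb, Complex.betaIntegral]
  have : ∫ x in (0:ℝ)..1, (x:ℂ) ^ ((a:ℂ) - 1) * (1 - (x:ℂ)) ^ ((b:ℂ) - 1)
      = ∫ x in (0:ℝ)..1, ((x ^ (a - 1) * (1 - x) ^ (b - 1) : ℝ) : ℂ) := by
    apply intervalIntegral.integral_congr
    intro x hx
    rw [Set.uIcc_of_le zero_le_one] at hx
    simp only
    rw [Complex.ofReal_mul, Complex.ofReal_cpow hx.1, Complex.ofReal_cpow (by linarith [hx.2])]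
    push_cast
    rfl
  rw [this, intervalIntegral.integral_ofReal, Complex.ofReal_re, Beta]

open ProbabilityTheory in
lemma beta_half (n : ℕ) :
    beta ((n + 1 : ℕ) : ℝ) (1 / 2) * ((n + 1 : ℕ) : ℝ) * ((n + 1).centralBinom : ℝ)
      = 4 ^ (n + 1) := by
  induction n with
  | zero =>
    have h : Real.Gamma (1 + 1 / 2) = 1 / 2 * Real.Gamma (1 / 2) := by
      rw [add_comm, Real.Gamma_add_one (by norm_num)]
    have h0 : Real.Gamma (1 / 2) ≠ 0 := (Real.Gamma_pos_of_pos (by norm_num)).ne'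
    simp only [beta, zero_add, Nat.cast_one, h, Real.Gamma_one]
    have : Nat.centralBinom 1 = 2 := by decide
    rw [this]
    field_simp
    norm_num
  | succ n ih =>
    have h1 : Real.Gamma (((n + 1 + 1 : ℕ) : ℝ) + 1 / 2)
        = ((n + 1 : ℕ) + 1 / 2) * Real.Gamma (((n + 1 : ℕ) : ℝ) + 1 / 2) := by
      rw [← Real.Gamma_add_one (by positivity)]
      congr 1
      push_cast
      ring
    have h2 : Real.Gamma ((n + 1 + 1 : ℕ) : ℝ)
        = (n + 1 : ℕ) * Real.Gamma ((n + 1 : ℕ) : ℝ) := by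
      rw [← Real.Gamma_add_one (by positivity)]
      congr 1
      push_cast
      ring
    have hc : ((n + 1 + 1 : ℕ) : ℝ) * ((n + 1 + 1).centralBinom : ℝ)
        = 2 * (2 * ((n + 1 : ℕ) : ℝ) + 1) * ((n + 1).centralBinom : ℝ) := by
      exact_mod_cast Nat.succ_mul_centralBinom_succ (n + 1)
    have h3 : Real.Gamma (((n + 1 : ℕ) : ℝ) + 1 / 2) ≠ 0 :=
      (Real.Gamma_pos_of_pos (by positivity)).ne'
    rw [mul_assoc, hc, pow_succ, ← ih]
    simp only [beta]
    rw [h1, h2]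
    have h4 : ((n + 1 : ℕ) : ℝ) + 1 / 2 ≠ 0 := by positivity
    have h5 : ((n + 1 : ℕ) : ℝ) * 2 + 1 ≠ 0 := by positivity
    generalize ((n + 1 : ℕ) : ℝ) = m at *
    field_simp
    ring

lemma incBeta_lim (z : ℕ) (hz : 1 ≤ z) :
    Tendsto (fun x : ℝ => (∫ t in (0:ℝ)..x, t ^ ((z:ℝ) - 1) * (1 - t) ^ ((1/2:ℝ) - 1)) / x ^ z)
      (nhdsWithin 0 (Set.Ioi 0)) (nhds (1 / z)) := by
  have hz1 : (1:ℝ) ≤ z := by exact_mod_cast hz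
  set f : ℝ → ℝ := fun t => t ^ ((z:ℝ) - 1) * (1 - t) ^ ((1/2:ℝ) - 1) with hf
  have hcont : ContinuousOn f (Set.Iio 1) := by
    intro t ht
    have ht' : t < 1 := ht
    apply ContinuousAt.continuousWithinAt
    apply ContinuousAt.mul
    · exact continuousAt_id.rpow_const (Or.inr (by linarith))
    · exact (continuousAt_const.sub continuousAt_id).rpow_const
        (Or.inl (sub_pos.mpr ht).ne')
  have hint : ∀ x < (1:ℝ), IntervalIntegrable f MeasureTheory.volume 0 x := by
    intro x hx
    apply (hcont.mono _).intervalIntegrable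
    intro t ht
    exact lt_of_le_of_lt ht.2 (max_lt one_pos hx)
  have hder : ∀ x < (1:ℝ), HasDerivAt (fun u => ∫ t in (0:ℝ)..u, f t) (f x) x := by
    intro x hx
    exact intervalIntegral.integral_hasDerivAt_right (hint x hx)
      (hcont.stronglyMeasurableAtFilter isOpen_Iio x hx)
      (hcont.continuousAt (isOpen_Iio.mem_nhds hx))
  have hlt : ∀ᶠ x in nhdsWithin (0:ℝ) (Set.Ioi 0), x < 1 :=
    nhdsWithin_le_nhds (Iio_mem_nhds one_pos)
  have hpos : ∀ᶠ x in nhdsWithin (0:ℝ) (Set.Ioi 0), 0 < x := self_mem_nhdsWithin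
  apply HasDerivAt.lhopital_zero_nhdsGT (f' := f) (g' := fun x => z * x ^ (z - 1))
  · exact hlt.mono hder
  · exact Eventually.of_forall fun x => hasDerivAt_pow z x
  · filter_upwards [hpos] with x hx
    positivity
  · have := (hder 0 one_pos).continuousAt.tendsto
    simp only [intervalIntegral.integral_same] at this
    exact this.mono_left nhdsWithin_le_nhds
  · have : Tendsto (fun x : ℝ => x ^ z) (nhds 0) (nhds (0 ^ z)) := (continuous_pow z).tendsto 0
    rw [zero_pow (by omega)] at this
    exact this.mono_left nhdsWithin_le_nhds
  · have h1 : Tendsto (fun x : ℝ => (1 - x) ^ ((1/2:ℝ) - 1) / z)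
        (nhdsWithin 0 (Set.Ioi 0)) (nhds (1 / z)) := by
      have : ContinuousAt (fun x : ℝ => (1 - x) ^ ((1/2:ℝ) - 1) / (z:ℝ)) 0 :=
        ((continuousAt_const.sub continuousAt_id).rpow_const (Or.inl (by norm_num))).div_const _
      have h := this.tendsto
      simp only [sub_zero, Real.one_rpow] at h
      exact h.mono_left nhdsWithin_le_nhds
    refine h1.congr' ?_
    filter_upwards [hpos] with x hx
    have : x ^ ((z:ℝ) - 1) = x ^ (z - 1) := by
      rw [← Real.rpow_natCast, Nat.cast_sub hz, Nat.cast_one]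
    simp only [hf, this]
    have : x ^ (z - 1) ≠ 0 := by positivity
    field_simp

lemma regBeta_lim (z : ℕ) (hz : 1 ≤ z) :
    Tendsto (fun q : ℝ => regBeta (4 * (1 - q) * q) (z : ℝ) (1 / 2) / q ^ z)
      (nhdsWithin 0 (Set.Ioi 0)) (nhds (2 * ((2 * z - 1).choose z : ℝ))) := by
  have hlt : ∀ᶠ x in nhdsWithin (0:ℝ) (Set.Ioi 0), x < 1 :=
    nhdsWithin_le_nhds (Iio_mem_nhds one_pos)
  have hpos : ∀ᶠ x in nhdsWithin (0:ℝ) (Set.Ioi 0), 0 < x := self_mem_nhdsWithin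
  have hx : Tendsto (fun q : ℝ => 4 * (1 - q) * q) (nhdsWithin 0 (Set.Ioi 0))
      (nhdsWithin 0 (Set.Ioi 0)) := by
    apply tendsto_nhdsWithin_of_tendsto_nhds_of_eventually_within
    · have : Continuous (fun q : ℝ => 4 * (1 - q) * q) := by fun_prop
      have h := this.tendsto 0
      simp only [mul_zero] at h
      exact h.mono_left nhdsWithin_le_nhds
    · filter_upwards [hlt, hpos] with q h1 h2
      have : 0 < 1 - q := by linarith
      show 0 < 4 * (1 - q) * q
      positivity
  have h1 := (incBeta_lim z hz).comp hx
  have h2 : Tendsto (fun q : ℝ => (4 * (1 - q)) ^ z / Beta z (1/2)) (nhdsWithin 0 (Set.Ioi 0))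
      (nhds (4 ^ z / Beta z (1/2))) := by
    have : Continuous (fun q : ℝ => (4 * (1 - q)) ^ z / Beta z (1/2)) := by fun_prop
    have h := this.tendsto 0
    simp only [sub_zero, mul_one] at h
    exact h.mono_left nhdsWithin_le_nhds
  have h3 := h1.mul h2
  have hval : 1 / (z:ℝ) * (4 ^ z / Beta z (1/2)) = 2 * ((2 * z - 1).choose z : ℝ) := by
    obtain ⟨n, rfl⟩ : ∃ n, z = n + 1 := ⟨z - 1, by omega⟩
    have hb := beta_half n
    have hbp := ProbabilityTheory.beta_pos (α := ((n + 1 : ℕ) : ℝ)) (β := 1 / 2)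
      (by positivity) (by norm_num)
    rw [Beta_eq_beta _ _ (by positivity) (by norm_num), ← hb]
    have hc : ((n + 1).centralBinom : ℝ) = 2 * ((2 * (n + 1) - 1).choose (n + 1) : ℝ) := by
      have : (n + 1).centralBinom = 2 * (2 * (n + 1) - 1).choose (n + 1) := by
        rw [Nat.centralBinom_eq_two_mul_choose]
        have e1 : 2 * (n + 1) = (2 * n + 1) + 1 := by ring
        have e2 : 2 * (n + 1) - 1 = 2 * n + 1 := by omega
        rw [e2, e1, Nat.choose_succ_succ, Nat.choose_symm_half]
        have := Nat.choose_symm_half n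
        omega
      exact_mod_cast this
    rw [hc]
    have : ((n + 1 : ℕ) : ℝ) ≠ 0 := by positivity
    field_simp
  rw [hval] at h3
  refine h3.congr' ?_
  filter_upwards [hlt, hpos] with q h1 h2
  have h4 : (1 - q) ≠ 0 := by linarith
  simp only [Function.comp, regBeta, mul_pow]
  field_simp

lemma regBeta_cont (z : ℕ) (hz : 1 ≤ z) :
    Continuous (fun x : ℝ => regBeta x (1 / 2) (z : ℝ)) := by
  have hz1 : (1:ℝ) ≤ z := by exact_mod_cast hz
  unfold regBeta
  apply Continuous.div_const
  apply intervalIntegral.continuous_primitive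
  intro a b
  apply IntervalIntegrable.mul_continuousOn
  · exact intervalIntegral.intervalIntegrable_rpow' (by norm_num)
  · exact ((continuous_const.sub continuous_id).rpow_const
      (fun _ => Or.inr (by linarith))).continuousOn

/-- `R(q)/q^z → 2 C(2z-1,z)(v+1) + 2/B(z,z)` as `q → 0⁺`. -/
theorem nakamoto_revenue_small_q (A z : ℕ) (hA2 : 2 ≤ A) (hz : 1 ≤ z) (hAz : z ≤ A)
    (v : ℝ) (hv : 0 ≤ v) :
    Tendsto (fun q : ℝ =>
        (let p : ℝ := 1 - q
         let lam : ℝ := q / p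
         q * (z : ℝ) / (2 * p) * regBeta (4 * p * q) (z : ℝ) (1 / 2)
          - ((A : ℝ) + 1) * lam ^ (A + 1)
              / (p * (1 - lam) ^ 3 * ((1 - lam ^ (A + 1)) / (1 - lam)) ^ 2)
              * regBeta ((p - q) ^ 2) (1 / 2) (z : ℝ)
          + (2 - lam + lam ^ (A + 2))
              / ((1 - lam) ^ 2 * ((1 - lam ^ (A + 1)) / (1 - lam)))
              * (p ^ (z - 1) * q ^ z / Beta (z : ℝ) (z : ℝ))
          + ((regBeta (4 * p * q) (z : ℝ) (1 / 2) - lam ^ (A + 1)) / (1 - lam ^ (A + 1)))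
              * (v + 1)) / q ^ z)
      (nhdsWithin 0 (Set.Ioi 0))
      (nhds (2 * ((2 * z - 1).choose z : ℝ) * (v + 1) + 2 / Beta (z : ℝ) (z : ℝ))) := by
  have hlt : ∀ᶠ x in nhdsWithin (0:ℝ) (Set.Ioi 0), x < 1/4 :=
    nhdsWithin_le_nhds (Iio_mem_nhds (by norm_num))
  have hpos : ∀ᶠ x in nhdsWithin (0:ℝ) (Set.Ioi 0), 0 < x := self_mem_nhdsWithin
  have hG := regBeta_lim z hz
  set L : ℝ := 2 * ((2 * z - 1).choose z : ℝ) with hL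
  have hAz' : A + 1 - z ≠ 0 := by omega
  have hlam : ContinuousAt (fun q : ℝ => q / (1 - q)) 0 :=
    continuousAt_id.div (continuousAt_const.sub continuousAt_id) (by norm_num)
  have hp : ContinuousAt (fun q : ℝ => 1 - q) 0 := continuousAt_const.sub continuousAt_id
  have c1 : ContinuousAt (fun q : ℝ => q * (z : ℝ) / (2 * (1 - q))) 0 :=
    (continuousAt_id.mul continuousAt_const).div (continuousAt_const.mul hp) (by norm_num)
  have cpow : ContinuousAt (fun q : ℝ => q ^ (A + 1 - z) / (1 - q) ^ (A + 1)) 0 :=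
    (continuousAt_id.pow _).div (hp.pow _) (by norm_num)
  have cgeo : ContinuousAt (fun q : ℝ => (1 - (q / (1 - q)) ^ (A + 1)) / (1 - q / (1 - q))) 0 :=
    (continuousAt_const.sub (hlam.pow _)).div (continuousAt_const.sub hlam) (by norm_num)
  have c2 : ContinuousAt (fun q : ℝ => ((A : ℝ) + 1) * (q ^ (A + 1 - z) / (1 - q) ^ (A + 1))
      / ((1 - q) * (1 - q / (1 - q)) ^ 3
        * ((1 - (q / (1 - q)) ^ (A + 1)) / (1 - q / (1 - q))) ^ 2)
      * regBeta ((1 - q - q) ^ 2) (1 / 2) (z : ℝ)) 0 := by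
    apply ContinuousAt.mul
    · exact (continuousAt_const.mul cpow).div
        ((hp.mul ((continuousAt_const.sub hlam).pow _)).mul (cgeo.pow _)) (by norm_num)
    · exact ((regBeta_cont z hz).comp
        (by fun_prop : Continuous fun q : ℝ => (1 - q - q) ^ 2)).continuousAt
  have c3 : ContinuousAt (fun q : ℝ => (2 - q / (1 - q) + (q / (1 - q)) ^ (A + 2))
      / ((1 - q / (1 - q)) ^ 2 * ((1 - (q / (1 - q)) ^ (A + 1)) / (1 - q / (1 - q))))
      * ((1 - q) ^ (z - 1) / Beta (z : ℝ) (z : ℝ))) 0 := by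
    apply ContinuousAt.mul
    · exact ((continuousAt_const.sub hlam).add (hlam.pow _)).div
        (((continuousAt_const.sub hlam).pow _).mul cgeo) (by norm_num)
    · exact (hp.pow _).div_const _
  have c4 : ContinuousAt (fun q : ℝ => 1 - (q / (1 - q)) ^ (A + 1)) 0 :=
    continuousAt_const.sub (hlam.pow _)
  have t1 := c1.tendsto.mono_left (nhdsWithin_le_nhds (s := Set.Ioi 0))
  have t2 := c2.tendsto.mono_left (nhdsWithin_le_nhds (s := Set.Ioi 0))
  have t3 := c3.tendsto.mono_left (nhdsWithin_le_nhds (s := Set.Ioi 0))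
  have t4 := c4.tendsto.mono_left (nhdsWithin_le_nhds (s := Set.Ioi 0))
  have t5 := cpow.tendsto.mono_left (nhdsWithin_le_nhds (s := Set.Ioi 0))
  have T := (((t1.mul hG).sub t2).add t3).add
    ((((hG.sub t5).div t4 (by norm_num))).mul_const (v + 1))
  have hval : L * (v + 1) + 2 / Beta (z : ℝ) (z : ℝ) =
    0 * (z : ℝ) / (2 * (1 - 0)) * L - ((A : ℝ) + 1) * (0 ^ (A + 1 - z) / (1 - 0) ^ (A + 1))
      / ((1 - 0) * (1 - 0 / (1 - 0)) ^ 3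
        * ((1 - (0 / (1 - 0)) ^ (A + 1)) / (1 - 0 / (1 - 0))) ^ 2)
      * regBeta ((1 - 0 - 0) ^ 2) (1 / 2) (z : ℝ)
    + (2 - 0 / (1 - 0) + (0 / (1 - 0)) ^ (A + 2))
      / ((1 - 0 / (1 - 0)) ^ 2 * ((1 - (0 / (1 - 0)) ^ (A + 1)) / (1 - 0 / (1 - 0))))
      * ((1 - 0) ^ (z - 1) / Beta (z : ℝ) (z : ℝ))
    + (L - 0 ^ (A + 1 - z) / (1 - 0) ^ (A + 1)) / (1 - (0 / (1 - 0)) ^ (A + 1)) * (v + 1) := by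
    simp [zero_pow hAz']
    ring
  rw [hval]
  refine T.congr' ?_
  filter_upwards [hlt, hpos] with q h1 h2
  have hq : q ^ z ≠ 0 := by positivity
  have e : (q / (1 - q)) ^ (A + 1) = q ^ z * (q ^ (A + 1 - z) / (1 - q) ^ (A + 1)) := by
    rw [div_pow, ← mul_div_assoc, ← pow_add]
    congr 2
    omega
  simp only [Pi.div_apply]
  generalize hw : q ^ (A + 1 - z) / (1 - q) ^ (A + 1) = w at *
  generalize regBeta ((1 - q - q) ^ 2) (1 / 2) (z : ℝ) = r1
  generalize regBeta (4 * (1 - q) * q) (z : ℝ) (1 / 2) = r2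
  generalize hE : (1 - (q / (1 - q)) ^ (A + 1)) = E
  generalize q / (1 - q) = lam at *
  rw [e]
  generalize q ^ z = Q at *
  generalize (1 - q) * (1 - lam) ^ 3 * (E / (1 - lam)) ^ 2 = D2
  generalize (2 - lam + lam ^ (A + 2)) / ((1 - lam) ^ 2 * (E / (1 - lam))) = D3
  generalize Beta (z : ℝ) (z : ℝ) = B
  generalize q * (z : ℝ) / (2 * (1 - q)) = D1
  have e2 : r2 = Q * (r2 / Q) := by field_simp
  generalize r2 / Q = s at *
  rw [e2, eq_div_iff hq]
  ring
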